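/- For every real z with |z| < 1, 1 + (z²/4)·₄F₃(1,1,3/2,3/2; 2,2,2; z²) + (9z⁴/128)·₄F₃(2,2,5/2,5/2; 3,3,3; z²) = ₂F₁(1/2,1/2; 1; z²). -/

import Mathlib

/-!
Write `c n = ((1/2)ₙ / n!)²` for the coefficients of `₂F₁(1/2,1/2;1;x)`. Shifting Pochhammer symbols
shows that `(x/4) ₄F₃(1,1,3/2,3/2;2,2,2;x) = ∑_{m ≥ 1} c m xᵐ / m` and
`(9x²/128) ₄F₃(2,2,5/2,5/2;3,3,3;x) = ∑_{m ≥ 2} c m xᵐ (m - 1) / m`. Since `1/m + (m-1)/m = 1`, the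
sum of the two is `∑_{m ≥ 1} c m xᵐ`. All series converge for `|x| < 1` because `0 ≤ c m ≤ 1`.
-/

open Real Finset

/-- Pochhammer symbol `(a)ₙ = a(a+1)⋯(a+n−1) = Γ(a+n)/Γ(a)`. -/
noncomputable def poch (a : ℝ) (n : ℕ) : ℝ := ∏ i ∈ Finset.range n, (a + i)

/-- The generalized hypergeometric function `₄F₃(1,1,3/2,3/2; 2,2,2; z)`. -/
noncomputable def F43a (z : ℝ) : ℝ :=
  ∑' n : ℕ, (poch 1 n * poch 1 n * poch (3/2) n * poch (3/2) n) /
      (poch 2 n * poch 2 n * poch 2 n) * z ^ n / (n.factorial : ℝ)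

/-- The generalized hypergeometric function `₄F₃(2,2,5/2,5/2; 3,3,3; z)`. -/
noncomputable def F43b (z : ℝ) : ℝ :=
  ∑' n : ℕ, (poch 2 n * poch 2 n * poch (5/2) n * poch (5/2) n) /
      (poch 3 n * poch 3 n * poch 3 n) * z ^ n / (n.factorial : ℝ)

/-- The Gauss hypergeometric function `₂F₁(1/2,1/2; 1; z)`. -/
noncomputable def F21 (z : ℝ) : ℝ :=
  ∑' n : ℕ, (poch (1/2) n * poch (1/2) n) / poch 1 n * z ^ n / (n.factorial : ℝ)

/-- The coefficient of `xⁿ` in `₂F₁(1/2,1/2;1;x)`. -/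
noncomputable def coeff21 (n : ℕ) : ℝ := (poch (1/2) n / (n.factorial : ℝ)) ^ 2

lemma poch_succ_left (a : ℝ) (n : ℕ) : poch a (n + 1) = a * poch (a + 1) n := by
  simp only [poch, Finset.prod_range_succ', Nat.cast_zero, add_zero, Nat.cast_add, Nat.cast_one]
  rw [mul_comm]
  congr 1
  exact Finset.prod_congr rfl fun i _ => by ring

lemma poch_one (n : ℕ) : poch 1 n = n.factorial := by
  induction n with
  | zero => simp [poch]
  | succ k ih =>
    rw [poch, Finset.prod_range_succ, ← poch, ih, Nat.factorial_succ]
    push_cast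
    ring

lemma poch_two (n : ℕ) : poch 2 n = (n + 1) * n.factorial := by
  have h := poch_succ_left 1 n
  rw [poch_one, Nat.factorial_succ] at h
  norm_num at h
  exact h.symm

lemma poch_three (n : ℕ) : poch 3 n = (n + 2) * (n + 1) * n.factorial / 2 := by
  have h := poch_succ_left 2 n
  rw [poch_two, Nat.factorial_succ] at h
  norm_num at h
  linarith

lemma poch_three_halves (n : ℕ) : poch (3/2) n = 2 * poch (1/2) (n + 1) := by
  have h := poch_succ_left (1/2) n
  norm_num at h ⊢
  linarith

lemma poch_five_halves (n : ℕ) : poch (5/2) n = 4 / 3 * poch (1/2) (n + 2) := by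
  have h := poch_succ_left (3/2) n
  rw [poch_three_halves] at h
  norm_num at h ⊢
  linarith

lemma term21 (n : ℕ) (x : ℝ) :
    (poch (1/2) n * poch (1/2) n) / poch 1 n * x ^ n / (n.factorial : ℝ) = coeff21 n * x ^ n := by
  have hn : (n.factorial : ℝ) ≠ 0 := by positivity
  rw [poch_one, coeff21]
  field_simp

lemma term43a (n : ℕ) (x : ℝ) :
    x / 4 * ((poch 1 n * poch 1 n * poch (3/2) n * poch (3/2) n) /
      (poch 2 n * poch 2 n * poch 2 n) * x ^ n / (n.factorial : ℝ)) =
      coeff21 (n + 1) * x ^ (n + 1) / (n + 1) := by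
  have hn : (n.factorial : ℝ) ≠ 0 := by positivity
  have h1 : (n + 1 : ℝ) ≠ 0 := by positivity
  rw [poch_one, poch_two, poch_three_halves, coeff21, Nat.factorial_succ]
  push_cast
  field_simp
  ring

lemma term43b (n : ℕ) (x : ℝ) :
    9 * x ^ 2 / 128 * ((poch 2 n * poch 2 n * poch (5/2) n * poch (5/2) n) /
      (poch 3 n * poch 3 n * poch 3 n) * x ^ n / (n.factorial : ℝ)) =
      coeff21 (n + 2) * x ^ (n + 2) * ((n + 1) / (n + 2)) := by
  have hn : (n.factorial : ℝ) ≠ 0 := by positivity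
  have h1 : (n + 1 : ℝ) ≠ 0 := by positivity
  have h2 : (n + 2 : ℝ) ≠ 0 := by positivity
  rw [poch_two, poch_three, poch_five_halves, coeff21, Nat.factorial_succ, Nat.factorial_succ]
  push_cast
  rw [show (n : ℝ) + 1 + 1 = n + 2 by ring]
  field_simp
  ring

lemma coeff21_nonneg (n : ℕ) : 0 ≤ coeff21 n := sq_nonneg _

lemma coeff21_le_one (n : ℕ) : coeff21 n ≤ 1 := by
  have h0 : 0 ≤ poch (1/2) n := Finset.prod_nonneg fun i _ => by positivity
  have h1 : poch (1/2) n ≤ n.factorial := by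
    rw [← poch_one]
    exact Finset.prod_le_prod (fun i _ => by positivity) fun i _ => by linarith
  exact pow_le_one₀ (by positivity) (div_le_one_of_le₀ h1 (by positivity))

/-- Hypergeometric identity from differentiating the square lattice STGF. -/
theorem square_lattice_hypergeom_identity (z : ℝ) (hz : |z| < 1) :
    1 + (z ^ 2 / 4) * F43a (z ^ 2) + (9 * z ^ 4 / 128) * F43b (z ^ 2) = F21 (z ^ 2) := by
  have hx0 : 0 ≤ z ^ 2 := sq_nonneg z
  have hx1 : z ^ 2 < 1 := (sq_lt_one_iff_abs_lt_one z).2 hz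
  rw [show z ^ 4 = (z ^ 2) ^ 2 by ring]
  generalize z ^ 2 = x at hx0 hx1
  have hs : Summable fun n => coeff21 n * x ^ n :=
    (summable_geometric_of_lt_one hx0 hx1).of_nonneg_of_le
      (fun n => mul_nonneg (coeff21_nonneg n) (by positivity))
      (fun n => mul_le_of_le_one_left (by positivity) (coeff21_le_one n))
  have hs1 := (summable_nat_add_iff 1).2 hs
  have hs2 := (summable_nat_add_iff 2).2 hs
  have hnn : ∀ n, 0 ≤ coeff21 n * x ^ n := fun n =>
    mul_nonneg (coeff21_nonneg n) (by positivity)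
  have ha : Summable fun n : ℕ => coeff21 (n + 1) * x ^ (n + 1) / ((n : ℝ) + 1) :=
    hs1.of_nonneg_of_le (fun n => div_nonneg (hnn _) (by positivity))
      (fun n => div_le_self (hnn _) (by linarith [n.cast_nonneg (α := ℝ)]))
  have hb : Summable fun n : ℕ =>
      coeff21 (n + 2) * x ^ (n + 2) * (((n : ℝ) + 1) / (n + 2)) :=
    hs2.of_nonneg_of_le (fun n => mul_nonneg (hnn _) (by positivity))
      (fun n => mul_le_of_le_one_right (hnn _)
        (div_le_one_of_le₀ (by linarith) (by positivity)))
  have ha' := (summable_nat_add_iff 1).2 ha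
  rw [F43a, F43b, F21, ← tsum_mul_left, ← tsum_mul_left]
  simp only [term21, term43a, term43b]
  -- Peel off the terms of degree below 2, so that all three series start at degree 2.
  rw [hs.tsum_eq_zero_add, hs1.tsum_eq_zero_add, ha.tsum_eq_zero_add, add_assoc, add_assoc,
    ← ha'.tsum_add hb]
  congr 1
  · simp [coeff21, poch]
  congr 1
  · simp
  refine tsum_congr fun n => ?_
  have h2 : (n + 2 : ℝ) ≠ 0 := by positivity
  push_cast
  rw [show (n : ℝ) + 1 + 1 = n + 2 by ring]
  field_simp
  ring
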